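/- arXiv:math/9811142 — 3 statements merged into one kernel-verified Lean document; each statement's English description precedes it below -/
import Mathlib

section
/- Fix a, b > 0 and let v = ab/(a + b) be the classical reduced mass. For k > max(2v, 0) let v_f(k) = ab/(a + b − 2ab/k) be the deformed reduced mass. Then k·(v_f(k) − v) tends to 2v² as k tends to +∞; equivalently, v_f = v·(1 + 2v/k + o(1/k)), which yields the first-order correction E_n = −(v e⁴ / 2ℏ²n²)(1 + 2v/k + …) to the Bohr energy levels of the k-deformed hydrogen atom. -/
/-- First-order correction to the reduced mass: `k (v_f(k) - v) → 2v²` as `k → ∞`,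
i.e. `v_f = v (1 + 2v/k + o(1/k))`, yielding the correction to the Bohr levels. -/
theorem reduced_mass_first_order_correction (a b : ℝ) (ha : 0 < a) (hb : 0 < b) :
    Filter.Tendsto
      (fun k : ℝ => k * (a * b / (a + b - 2 * a * b / k) - a * b / (a + b)))
      Filter.atTop (nhds (2 * (a * b / (a + b)) ^ 2)) := by
  have hs : 0 < a + b := by positivity
  have h0 : Filter.Tendsto (fun k : ℝ => 2 * a * b / k) Filter.atTop (nhds 0) :=
    Filter.Tendsto.const_div_atTop Filter.tendsto_id _
  have h1 : Filter.Tendsto (fun k : ℝ => a + b - 2 * a * b / k) Filter.atTop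
      (nhds (a + b)) := by
    simpa using h0.const_sub (a + b)
  have h2 : Filter.Tendsto
      (fun k : ℝ => 2 * (a * b) ^ 2 / ((a + b - 2 * a * b / k) * (a + b)))
      Filter.atTop (nhds (2 * (a * b / (a + b)) ^ 2)) := by
    have h := (tendsto_const_nhds (x := 2 * (a * b) ^ 2)).div
      (h1.mul_const (a + b)) (mul_pos hs hs).ne'
    have e : 2 * (a * b / (a + b)) ^ 2 = 2 * (a * b) ^ 2 / ((a + b) * (a + b)) := by
      field_simp
    rw [e]
    exact h
  refine h2.congr' ?_
  filter_upwards [Filter.eventually_gt_atTop 0, h1.eventually (lt_mem_nhds hs)] with k hk hd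
  have e : a * b / (a + b - 2 * a * b / k) - a * b / (a + b)
      = a * b * (2 * a * b / k) / ((a + b - 2 * a * b / k) * (a + b)) := by
    rw [div_sub_div _ _ hd.ne' hs.ne']
    ring
  have e2 : k * (a * b * (2 * a * b / k)) = 2 * (a * b) ^ 2 := by
    field_simp
  rw [e, ← mul_div_assoc, e2]
end

section
/- Let k > 0, let a, b satisfy 0 < a < k/2 and 0 < b < k/2, set M = a + b − 2ab/k, λ = √(1 − 2b/k), and v = ab/M. Then for all vectors p, p′ in Euclidean space ℝ³: ‖p‖²/(2a) + ‖p′‖²/(2b) = ‖λ·p + p′‖²/(2M) + ‖(b/M)·p − (aλ/M)·p′‖²/(2v). (The total kinetic energy of two free particles decomposes exactly into center-of-mass kinetic energy ‖P‖²/(2M) with total momentum P = λp + p′ and relative kinetic energy ‖Π‖²/(2v) with relative momentum Π = (b·p − aλ·p′)/M.) -/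
/-- Exact decomposition of the two-particle kinetic energy into center-of-mass and
relative parts, for the variables built from the direct coproduct (eqs. (15)-(16)):
total momentum `P = λ p + p'`, relative momentum `Π = (b p - a λ p')/M`, where
`M = a + b - 2ab/k`, `λ = √(1 - 2b/k)`, `v = ab/M`. -/
theorem kinetic_energy_decomposition (k : ℝ) (hk : 0 < k) (a b : ℝ)
    (ha₀ : 0 < a) (ha : a < k / 2) (hb₀ : 0 < b) (hb : b < k / 2)
    (M lam v : ℝ) (hM : M = a + b - 2 * a * b / k)
    (hlam : lam = Real.sqrt (1 - 2 * b / k)) (hv : v = a * b / M)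
    (p p' : EuclideanSpace ℝ (Fin 3)) :
    ‖p‖ ^ 2 / (2 * a) + ‖p'‖ ^ 2 / (2 * b) =
      ‖lam • p + p'‖ ^ 2 / (2 * M) +
        ‖(b / M) • p - (a * lam / M) • p'‖ ^ 2 / (2 * v) := by
  have hpos : 0 < 1 - 2 * b / k := by
    rw [sub_pos, div_lt_one hk]; linarith
  have hl2 : lam ^ 2 = 1 - 2 * b / k := by
    rw [hlam, Real.sq_sqrt hpos.le]
  have hM' : M = b + a * lam ^ 2 := by
    rw [hM, hl2]; ring
  have hMpos : 0 < b + a * lam ^ 2 := by positivity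
  rw [norm_add_sq_real, norm_sub_sq_real]
  simp only [norm_smul, inner_smul_left, inner_smul_right, mul_pow, Real.norm_eq_abs, sq_abs,
    conj_trivial]
  clear hM hlam hl2
  subst hv hM'
  have h0 := hMpos.ne'
  have h1 := ha₀.ne'
  have h2 := hb₀.ne'
  field_simp
  ring
end

section
/- Let k > 0, let a, b satisfy 0 < a < k/2 and 0 < b < k/2, set M = a + b − 2ab/k, μ = √(1 − 2a/k), and v = ab/M. Then for all vectors p, p′ in Euclidean space ℝ³: ‖p‖²/(2a) + ‖p′‖²/(2b) = ‖p + μ·p′‖²/(2M) + ‖(bμ/M)·p − (a/M)·p′‖²/(2v). (The same kinetic-energy decomposition holds for the dynamical variables built from the transposed coproduct, eq. (22), with total momentum P̃ = p + μp′ and relative momentum Π̃ = (bμ·p − a·p′)/M.) -/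
/-- Exact decomposition of the two-particle kinetic energy into center-of-mass and
relative parts, for the variables built from the transposed coproduct (eq. (22)):
total momentum `P̃ = p + μ p'`, relative momentum `Π̃ = (b μ p - a p')/M`, where
`M = a + b - 2ab/k`, `μ = √(1 - 2a/k)`, `v = ab/M`. -/
theorem kinetic_energy_decomposition_transposed (k : ℝ) (hk : 0 < k) (a b : ℝ)
    (ha₀ : 0 < a) (ha : a < k / 2) (hb₀ : 0 < b) (hb : b < k / 2)
    (M mu v : ℝ) (hM : M = a + b - 2 * a * b / k)
    (hmu : mu = Real.sqrt (1 - 2 * a / k)) (hv : v = a * b / M)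
    (p p' : EuclideanSpace ℝ (Fin 3)) :
    ‖p‖ ^ 2 / (2 * a) + ‖p'‖ ^ 2 / (2 * b) =
      ‖p + mu • p'‖ ^ 2 / (2 * M) +
        ‖(b * mu / M) • p - (a / M) • p'‖ ^ 2 / (2 * v) := by
  have h2 : 2 * a / k < 1 := by
    rw [div_lt_one hk]
    linarith
  have hsq : mu ^ 2 = 1 - 2 * a / k := by
    rw [hmu, Real.sq_sqrt]
    linarith
  have hM2 : M = a + b * mu ^ 2 := by
    rw [hsq, hM]
    ring
  have hMpos : 0 < M := by
    rw [hM2]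
    positivity
  have e1 : ‖p + mu • p'‖ ^ 2 = ‖p‖ ^ 2 + 2 * mu * inner ℝ p p' + mu ^ 2 * ‖p'‖ ^ 2 := by
    rw [norm_add_sq_real, inner_smul_right, norm_smul, mul_pow, Real.norm_eq_abs, sq_abs]
    ring
  have e2 : ‖(b * mu / M) • p - (a / M) • p'‖ ^ 2 =
      (b * mu / M) ^ 2 * ‖p‖ ^ 2 - 2 * (b * mu / M) * (a / M) * inner ℝ p p'
        + (a / M) ^ 2 * ‖p'‖ ^ 2 := by
    rw [norm_sub_sq_real, inner_smul_right, real_inner_smul_left, norm_smul, norm_smul,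
      mul_pow, mul_pow, Real.norm_eq_abs, Real.norm_eq_abs, sq_abs, sq_abs]
    ring
  rw [e1, e2, hv]
  clear e1 e2 hv hM hmu hsq
  generalize inner ℝ p p' = c
  generalize ‖p‖ ^ 2 = x
  generalize ‖p'‖ ^ 2 = y
  have hne := hMpos.ne'
  have hane := ha₀.ne'
  have hbne := hb₀.ne'
  field_simp
  rw [hM2]
  ring
end
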